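/- arXiv:1008.0156 — 2 statements merged into one kernel-verified Lean document; each statement's English description precedes it below -/
import Mathlib

section
/- Let S be a standard graded k-algebra of dimension d ≥ 1 over an infinite field k, and let k[X₁,...,X_d] and k[Y₁,...,Y_d] be graded Noether normalizations of S (all generators in S₁). Then there exists an index-free element: some k-linear combination y = Σⱼ cⱼYⱼ of the Yⱼ such that k[X₁,...,X_{d-1}, y] ⊆ S is again a graded Noether normalization of S. -/
/-- A family `x : Fin d → S` of degree-1 elements gives a graded Noether
normalization `k[x₁, …, x_d] ⊆ S`: the `xᵢ` generate a polynomial subring over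
which `S` is module-finite. -/
def IsGradedNoetherNormalization (k : Type*) {S : Type*} [Field k] [CommRing S]
    [Algebra k S] (𝒜 : ℕ → Submodule k S) {d : ℕ} (x : Fin d → S) : Prop :=
  (∀ i, x i ∈ 𝒜 1) ∧ AlgebraicIndependent k x ∧
    Module.Finite (Algebra.adjoin k (Set.range x)) S

/-!
Let `J` be the ideal generated by the `Xᵢ` other than the one being exchanged. Then `S / J` is
integral over a `k`-algebra with one generator, so `dim S / J ≤ 1`, while `S` modulo all the `Yⱼ`
has dimension at most `0`. As `k` is infinite, the span `V` of the `Yⱼ` is not covered by the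
finitely many proper subspaces `V ∩ P`, where `P` runs over the minimal primes of `J` not
containing `V`. A linear form `y ∈ V` outside all of them cuts the dimension of `S / J` down
to `0`, so `S / (J, y)` is finite over `k`, and the graded Nakayama lemma makes `S` finite over the
subalgebra generated by `y` and the remaining `Xᵢ`. These `d` elements are then algebraically
independent because `dim S = d`.
-/

section KrullDimension

theorem ringKrullDim_le_of_isIntegral {R S : Type*} [CommRing R] [CommRing S] [Algebra R S]
    [Algebra.IsIntegral R S] : ringKrullDim S ≤ ringKrullDim R :=
  Order.krullDim_le_of_strictMono (PrimeSpectrum.comap (algebraMap R S)) fun _ _ h ↦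
    Ideal.IsIntegral.comap_lt_comap h

theorem ringKrullDim_eq_of_isIntegral {R S : Type*} [CommRing R] [CommRing S] [Algebra R S]
    [Algebra.IsIntegral R S] [FaithfulSMul R S] : ringKrullDim S = ringKrullDim R := by
  refine le_antisymm ringKrullDim_le_of_isIntegral (iSup_le fun l ↦ ?_)
  obtain ⟨P, _, _⟩ := (inferInstance : Nonempty (Ideal.primesOver l.head.asIdeal S))
  obtain ⟨L, hL, -⟩ := Ideal.exists_ltSeries_of_hasGoingUp l P
  exact hL ▸ Order.LTSeries.length_le_krullDim L

theorem ringKrullDim_quotient_span_singleton_sup_le {R : Type*} [CommRing R] {I J : Ideal R}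
    {y : R} {n : ℕ} (hJ : ringKrullDim (R ⧸ J) ≤ n + 1) (hIJ : ringKrullDim (R ⧸ (I ⊔ J)) ≤ n)
    (hy : ∀ P ∈ J.minimalPrimes, y ∈ P → I ≤ P) :
    ringKrullDim (R ⧸ (Ideal.span {y} ⊔ J)) ≤ n := by
  rw [ringKrullDim_quotient] at hJ hIJ ⊢
  refine iSup_le fun l ↦ ?_
  have hyJ : Ideal.span {y} ⊔ J ≤ l.head.1.asIdeal := l.head.2
  obtain ⟨P, hP, hPl⟩ := Ideal.exists_minimalPrimes_le (le_sup_right.trans hyJ)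
  have := hP.1.1
  obtain heq | hlt := hPl.eq_or_lt
  · have hI : I ≤ P := hy P hP (heq ▸ hyJ (Ideal.mem_sup_left (Ideal.mem_span_singleton_self y)))
    have hmem (i) : I ⊔ J ≤ (l i).1.asIdeal :=
      (sup_le hI hP.1.2).trans (hPl.trans (l.head_le i))
    let l' : LTSeries (PrimeSpectrum.zeroLocus (R := R) (I ⊔ J : Ideal R)) :=
      ⟨l.length, fun i ↦ ⟨(l i).1, hmem i⟩, l.step⟩
    exact (Order.LTSeries.length_le_krullDim l').trans hIJ
  · have hmem (i) : J ≤ (l i).1.asIdeal := le_sup_right.trans (l i).2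
    let l' : LTSeries (PrimeSpectrum.zeroLocus (R := R) J) :=
      ⟨l.length, fun i ↦ ⟨(l i).1, hmem i⟩, l.step⟩
    let L := l'.cons ⟨⟨P, this⟩, hP.1.2⟩ hlt
    have hL : L.length = l.length + 1 := RelSeries.cons_length ..
    have hlen : (L.length : WithBot ℕ∞) ≤ n + 1 := (Order.LTSeries.length_le_krullDim L).trans hJ
    rw [hL] at hlen
    norm_cast at hlen ⊢
    exact Nat.succ_le_succ_iff.mp hlen

end KrullDimension

section PrimeAvoidance

theorem exists_mem_forall_mem_imp_le {k E : Type*} [DivisionRing k] [Infinite k]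
    [AddCommGroup E] [Module k E] (V : Subspace k E) {s : Set (Subspace k E)} (hs : s.Finite) :
    ∃ v ∈ V, ∀ W ∈ s, v ∈ W → V ≤ W := by
  classical
  let t := (hs.toFinset.filter (¬ V ≤ ·)).image (Submodule.comap V.subtype)
  have ht : ⊤ ∉ t := by simp [t, Submodule.comap_subtype_eq_top]
  obtain ⟨v, hv⟩ := (Set.ne_univ_iff_exists_notMem _).mp (Subspace.biUnion_ne_univ_of_top_notMem ht)
  refine ⟨v, v.2, fun W hW hvW ↦ ?_⟩
  by_contra hVW
  exact hv <| Set.mem_biUnion (Finset.mem_image_of_mem _ (by simp [hW, hVW])) hvW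

theorem exists_mem_ringKrullDim_quotient_span_singleton_sup_le {k R : Type*} [Field k] [Infinite k]
    [CommRing R] [Algebra k R] [IsNoetherianRing R] (V : Submodule k R) {J : Ideal R} {n : ℕ}
    (hJ : ringKrullDim (R ⧸ J) ≤ n + 1)
    (hVJ : ringKrullDim (R ⧸ (Ideal.span (V : Set R) ⊔ J)) ≤ n) :
    ∃ y ∈ V, ringKrullDim (R ⧸ (Ideal.span {y} ⊔ J)) ≤ n := by
  obtain ⟨y, hyV, hy⟩ := exists_mem_forall_mem_imp_le V
    (J.finite_minimalPrimes_of_isNoetherianRing.image (Submodule.restrictScalars k))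
  refine ⟨y, hyV, ringKrullDim_quotient_span_singleton_sup_le hJ hVJ fun P hP hyP ↦ ?_⟩
  exact Ideal.span_le.mpr (hy _ (Set.mem_image_of_mem _ hP) hyP)

end PrimeAvoidance

section Adjoin

theorem isIntegral_adjoin_of_surjective {R A B : Type*} [CommRing R] [CommRing A] [CommRing B]
    [Algebra R A] [Algebra R B] {f : A →ₐ[R] B} (hf : Function.Surjective f) {s : Set A} {t : Set B}
    (hst : Set.MapsTo f s (Algebra.adjoin R t)) [Algebra.IsIntegral (Algebra.adjoin R s) A] :
    Algebra.IsIntegral (Algebra.adjoin R t) B := by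
  have hmap : Algebra.adjoin R s ≤ (Algebra.adjoin R t).comap f := Algebra.adjoin_le hst
  refine ⟨hf.forall.mpr fun a ↦ ?_⟩
  exact (Algebra.IsIntegral.isIntegral (R := Algebra.adjoin R s) a).map_of_comp_eq
    ((f.comp (Algebra.adjoin R s).val).codRestrict _ fun b ↦ hmap b.2).toRingHom f.toRingHom rfl

variable {k S : Type*} [Field k] [CommRing S] [Algebra k S]

theorem ringKrullDim_adjoin_le_ncard {s : Set S} (hs : s.Finite) :
    ringKrullDim (Algebra.adjoin k s) ≤ s.ncard := by
  have : Finite s := hs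
  let φ := MvPolynomial.aeval (R := k) ((↑) : s → S)
  rw [Algebra.adjoin_eq_range]
  calc ringKrullDim φ.range
      ≤ ringKrullDim (MvPolynomial s k) :=
        ringKrullDim_le_of_surjective φ.rangeRestrict.toRingHom φ.rangeRestrict_surjective
    _ = s.ncard := by
        rw [MvPolynomial.ringKrullDim_of_isNoetherianRing, ringKrullDim_eq_zero_of_field, zero_add,
          Nat.card_coe_set_eq]

theorem algebraicIndependent_iff_ringKrullDim_eq_card {ι : Type*} [Finite ι] {x : ι → S}
    [Algebra.IsIntegral (Algebra.adjoin k (Set.range x)) S] :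
    AlgebraicIndependent k x ↔ ringKrullDim S = Nat.card ι := by
  have hpoly : ringKrullDim (MvPolynomial ι k) = Nat.card ι := by
    rw [MvPolynomial.ringKrullDim_of_isNoetherianRing, ringKrullDim_eq_zero_of_field, zero_add]
  rw [ringKrullDim_eq_of_isIntegral (R := Algebra.adjoin k (Set.range x))]
  refine ⟨fun hx ↦ hpoly ▸ (ringKrullDim_eq_of_ringEquiv hx.aevalEquiv.toRingEquiv).symm,
    fun hdim ↦ (injective_iff_map_eq_zero _).mpr fun p hp ↦ ?_⟩
  by_contra hp0
  rw [Algebra.adjoin_range_eq_range_aeval] at hdim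
  let φ := (MvPolynomial.aeval (R := k) x).rangeRestrict
  have hlt := ringKrullDim_succ_le_of_surjective φ.toRingHom (AlgHom.rangeRestrict_surjective _)
    (mem_nonZeroDivisors_of_ne_zero hp0) (Subtype.ext hp)
  rw [hpoly, hdim] at hlt
  norm_cast at hlt
  omega

theorem ringKrullDim_quotient_le_ncard {s t : Set S} {J : Ideal S}
    [Algebra.IsIntegral (Algebra.adjoin k s) S] (ht : t.Finite) (hst : s ⊆ J ∪ t) :
    ringKrullDim (S ⧸ J) ≤ t.ncard := by
  let π := Ideal.Quotient.mkₐ k J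
  have hmaps : Set.MapsTo π s (Algebra.adjoin k (π '' t)) := fun a ha ↦ by
    rcases hst ha with haJ | hat
    · rw [show π a = 0 from Ideal.Quotient.eq_zero_iff_mem.mpr haJ]
      exact zero_mem _
    · exact Algebra.subset_adjoin (Set.mem_image_of_mem π hat)
  have := isIntegral_adjoin_of_surjective (Ideal.Quotient.mkₐ_surjective k J) hmaps
  calc ringKrullDim (S ⧸ J)
      ≤ ringKrullDim (Algebra.adjoin k (π '' t)) := ringKrullDim_le_of_isIntegral
    _ ≤ (π '' t).ncard := ringKrullDim_adjoin_le_ncard (ht.image π)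
    _ ≤ t.ncard := mod_cast Set.ncard_image_le ht

end Adjoin

section GradedNakayama

open DirectSum

variable {k S : Type*} [CommRing k] [CommRing S] [Algebra k S] (𝒜 : ℕ → Submodule k S)
  [GradedAlgebra 𝒜]

theorem span_isHomogeneousElem_eq_top :
    Submodule.span k {a | SetLike.IsHomogeneousElem 𝒜 a} = ⊤ := by
  rw [eq_top_iff, ← (Decomposition.isInternal 𝒜).submodule_iSup_eq_top]
  exact iSup_le fun i _ ha ↦ Submodule.subset_span ⟨i, ha⟩

variable {𝒜}

theorem proj_mem_span_of_isHomogeneousElem {F : Set S} (hF : ∀ f ∈ F, SetLike.IsHomogeneousElem 𝒜 f)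
    {v : S} (hv : v ∈ Submodule.span k F) (n : ℕ) :
    GradedAlgebra.proj 𝒜 n v ∈ Submodule.span k F := by
  suffices Submodule.span k F ≤ (Submodule.span k F).comap (GradedAlgebra.proj 𝒜 n) from this hv
  refine Submodule.span_le.mpr fun f hf ↦ ?_
  obtain ⟨i, hi⟩ := hF f hf
  simp only [Submodule.comap_coe, Set.mem_preimage, SetLike.mem_coe, GradedAlgebra.proj_apply]
  obtain rfl | hin := eq_or_ne i n
  · rw [decompose_of_mem_same 𝒜 hi]
    exact Submodule.subset_span hf
  · rw [decompose_of_mem_ne 𝒜 hi hin]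
    exact zero_mem _

theorem proj_mem_of_mem_ideal_span {Z : Set S} (hZ : ∀ z ∈ Z, ∃ i ≠ 0, z ∈ 𝒜 i)
    {N : Submodule (Algebra.adjoin k Z) S} {n : ℕ} (hN : ∀ m < n, ∀ a ∈ 𝒜 m, a ∈ N)
    {x : S} (hx : x ∈ Ideal.span Z) : GradedAlgebra.proj 𝒜 n x ∈ N := by
  induction hx using Submodule.closure_induction with
  | zero => simp
  | add x y _ _ hx hy => simpa using add_mem hx hy
  | smul_mem r z hz =>
    obtain ⟨i, hi0, hzi⟩ := hZ z hz
    rw [GradedAlgebra.proj_apply, smul_eq_mul]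
    by_cases hin : i ≤ n
    · rw [coe_decompose_mul_of_right_mem_of_le 𝒜 hzi hin, mul_comm]
      exact N.smul_mem (⟨z, Algebra.subset_adjoin hz⟩ : Algebra.adjoin k Z)
        (hN _ (by omega) _ (SetLike.coe_mem _))
    · rw [coe_decompose_mul_of_right_mem_of_not_le 𝒜 hzi hin]
      exact zero_mem _

theorem span_adjoin_eq_top_of_span_sup_eq_top {Z F : Set S} (hZ : ∀ z ∈ Z, ∃ i ≠ 0, z ∈ 𝒜 i)
    (hF : ∀ f ∈ F, SetLike.IsHomogeneousElem 𝒜 f)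
    (hFZ : Submodule.span k F ⊔ (Ideal.span Z).restrictScalars k = ⊤) :
    Submodule.span (Algebra.adjoin k Z) F = ⊤ := by
  have hdeg (n : ℕ) : ∀ a ∈ 𝒜 n, a ∈ Submodule.span (Algebra.adjoin k Z) F := by
    induction n using Nat.strong_induction_on with
    | _ n ih =>
      intro a ha
      obtain ⟨v, hv, x, hx, rfl⟩ := Submodule.mem_sup.mp (hFZ ▸ Submodule.mem_top (x := a))
      rw [← decompose_of_mem_same 𝒜 ha, ← GradedAlgebra.proj_apply, map_add]
      exact add_mem (Submodule.span_subset_span k _ F (proj_mem_span_of_isHomogeneousElem hF hv n))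
        (proj_mem_of_mem_ideal_span hZ ih hx)
  classical
  refine eq_top_iff.mpr fun a _ ↦ ?_
  rw [← sum_support_decompose 𝒜 a]
  exact sum_mem fun i _ ↦ hdeg i _ (SetLike.coe_mem _)

theorem finite_adjoin_of_finite_quotient_span {Z : Set S} (hZ : ∀ z ∈ Z, ∃ i ≠ 0, z ∈ 𝒜 i)
    [Module.Finite k (S ⧸ Ideal.span Z)] : Module.Finite (Algebra.adjoin k Z) S := by
  classical
  let π : S →ₗ[k] S ⧸ Ideal.span Z := (Ideal.Quotient.mkₐ k _).toLinearMap
  have hπ : LinearMap.range π = ⊤ := LinearMap.range_eq_top.mpr (Ideal.Quotient.mkₐ_surjective k _)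
  have hspan : Submodule.span k (π '' {a | SetLike.IsHomogeneousElem 𝒜 a}) = ⊤ := by
    rw [← Submodule.map_span, span_isHomogeneousElem_eq_top, Submodule.map_top, hπ]
  obtain ⟨G, hG, hGspan⟩ := (Submodule.fg_span_iff_fg_span_finset_subset _).mp
    (hspan ▸ Module.Finite.fg_top)
  obtain ⟨F, hF, rfl⟩ := Finset.subset_set_image_iff.mp hG
  refine ⟨F, span_adjoin_eq_top_of_span_sup_eq_top hZ hF ?_⟩
  have hker : LinearMap.ker π = (Ideal.span Z).restrictScalars k := by
    ext; exact Ideal.Quotient.eq_zero_iff_mem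
  rw [← hker, ← LinearMap.map_eq_top_iff hπ, Submodule.map_span, ← Finset.coe_image, ← hGspan,
    hspan]

theorem finite_adjoin_of_ringKrullDim_quotient_span_le_zero [IsArtinianRing k]
    [Algebra.FiniteType k S] {Z : Set S} (hZ : ∀ z ∈ Z, ∃ i ≠ 0, z ∈ 𝒜 i)
    (hdim : ringKrullDim (S ⧸ Ideal.span Z) ≤ 0) :
    Module.Finite (Algebra.adjoin k Z) S := by
  have : Module.Finite k (S ⧸ Ideal.span Z) :=
    (Module.finite_iff_krullDimLE_zero k _).mpr ((Order.krullDimLE_iff _ _).mpr hdim)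
  exact finite_adjoin_of_finite_quotient_span hZ

end GradedNakayama

theorem exists_mem_finite_adjoin_insert {k S : Type*} [Field k] [Infinite k] [CommRing S]
    [Algebra k S] [Algebra.FiniteType k S] {𝒜 : ℕ → Submodule k S} [GradedAlgebra 𝒜]
    {x : S} {T : Set S} (hT : ∀ t ∈ T, ∃ i ≠ 0, t ∈ 𝒜 i)
    [Algebra.IsIntegral (Algebra.adjoin k (insert x T)) S] {V : Submodule k S} {i : ℕ}
    (hi : i ≠ 0) (hV : V ≤ 𝒜 i)
    [Algebra.IsIntegral (Algebra.adjoin k (V : Set S)) S] :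
    ∃ y ∈ V, Module.Finite (Algebra.adjoin k (insert y T)) S := by
  have := Algebra.FiniteType.isNoetherianRing k S
  have hTdim : ringKrullDim (S ⧸ Ideal.span T) ≤ (0 : ℕ) + 1 := by
    have hxT : insert x T ⊆ Ideal.span T ∪ {x} :=
      Set.insert_subset (Or.inr rfl) (Ideal.subset_span.trans Set.subset_union_left)
    simpa using ringKrullDim_quotient_le_ncard (k := k) (Set.finite_singleton x) hxT
  have hVdim : ringKrullDim (S ⧸ (Ideal.span (V : Set S) ⊔ Ideal.span T)) ≤ (0 : ℕ) := by
    have hVT : (V : Set S) ⊆ (Ideal.span (V : Set S) ⊔ Ideal.span T : Ideal S) ∪ ∅ := fun v hv ↦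
      Or.inl (Ideal.mem_sup_left (Ideal.subset_span hv))
    simpa using ringKrullDim_quotient_le_ncard (k := k) Set.finite_empty hVT
  obtain ⟨y, hyV, hy⟩ := exists_mem_ringKrullDim_quotient_span_singleton_sup_le V hTdim hVdim
  rw [← Ideal.span_insert, Nat.cast_zero] at hy
  exact ⟨y, hyV, finite_adjoin_of_ringKrullDim_quotient_span_le_zero
    (Set.forall_mem_insert.mpr ⟨⟨i, hi, hV hyV⟩, hT⟩) hy⟩

theorem range_update_eq_insert_image_compl {α β : Type*} [DecidableEq α] (f : α → β) (a : α)
    (b : β) : Set.range (Function.update f a b) = insert b (f '' {a}ᶜ) := by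
  rw [← Set.image_univ, ← Set.union_compl_self {a}, Set.image_union, Set.image_singleton,
    Function.update_self, Set.insert_eq]
  congr 1
  exact Set.image_congr fun i hi ↦ Function.update_of_ne hi b f

theorem exists_exchange_noether_normalization_general {k S : Type*} [Field k] [Infinite k]
    [CommRing S] [Algebra k S] {𝒜 : ℕ → Submodule k S} [GradedAlgebra 𝒜] {d : ℕ} {X : Fin d → S}
    (hX : IsGradedNoetherNormalization k 𝒜 X) {V : Submodule k S} (hV : V ≤ 𝒜 1)
    [Algebra.IsIntegral (Algebra.adjoin k (V : Set S)) S] (l : Fin d) :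
    ∃ y ∈ V, IsGradedNoetherNormalization k 𝒜 (Function.update X l y) := by
  obtain ⟨hX1, hXind, _⟩ := hX
  have : Algebra.FiniteType k (Algebra.adjoin k (Set.range X)) :=
    .adjoin_of_finite (Set.finite_range X)
  have : Algebra.FiniteType k S := .trans (S := Algebra.adjoin k (Set.range X)) this inferInstance
  have hdim : ringKrullDim S = Nat.card (Fin d) :=
    algebraicIndependent_iff_ringKrullDim_eq_card.mp hXind
  have hrange (y : S) := range_update_eq_insert_image_compl X l y
  have : Algebra.IsIntegral (Algebra.adjoin k (insert (X l) (X '' {l}ᶜ))) S := by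
    rw [← hrange, Function.update_eq_self]
    infer_instance
  obtain ⟨y, hyV, hy⟩ := exists_mem_finite_adjoin_insert (k := k) (x := X l)
    (T := X '' {l}ᶜ) (Set.forall_mem_image.mpr fun {i} _ ↦ ⟨1, one_ne_zero, hX1 i⟩) one_ne_zero hV
  rw [← hrange] at hy
  refine ⟨y, hyV, ?_, algebraicIndependent_iff_ringKrullDim_eq_card.mpr hdim, hy⟩
  exact (Function.forall_update_iff X fun _ z ↦ z ∈ 𝒜 1).mpr ⟨hV hyV, fun i _ ↦ hX1 i⟩

/-- Existence form of generic exchange: some `k`-linear combination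
`y = Σ cⱼ Yⱼ` makes `k[X₁,…,X_{d-1}, y] ⊆ S` a graded Noether normalization. -/
theorem exists_exchange_noether_normalization (k S : Type*) [Field k]
    [Infinite k] [CommRing S] [Algebra k S] (𝒜 : ℕ → Submodule k S)
    [GradedAlgebra 𝒜] (hfg : Algebra.FiniteType k S) (h0 : 𝒜 0 = 1)
    (hstd : Algebra.adjoin k (𝒜 1 : Set S) = ⊤)
    (d : ℕ) (hd : 1 ≤ d) (hdim : ringKrullDim S = d)
    (X Y : Fin d → S)
    (hX : IsGradedNoetherNormalization k 𝒜 X)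
    (hY : IsGradedNoetherNormalization k 𝒜 Y) :
    ∃ c : Fin d → k,
      IsGradedNoetherNormalization k 𝒜
        (fun i : Fin d => if (i : ℕ) + 1 = d then ∑ j, c j • Y j else X i) := by
  have : Module.Finite (Algebra.adjoin k (Submodule.span k (Set.range Y) : Set S)) S := by
    rw [Algebra.adjoin_span]
    exact hY.2.2
  obtain ⟨y, hy, h⟩ := exists_exchange_noether_normalization_general hX
    (Submodule.span_le.mpr (Set.range_subset_iff.mpr hY.1)) ⟨d - 1, by omega⟩
  obtain ⟨c, rfl⟩ := (Submodule.mem_span_range_iff_exists_fun k).mp hy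
  have hlast (i : Fin d) : (i : ℕ) + 1 = d ↔ i = ⟨d - 1, by omega⟩ := by
    rw [Fin.eq_mk_iff_val_eq]
    omega
  exact ⟨c, by simpa only [hlast, ← Function.update_apply] using h⟩
end

section
/- Let S be a standard ℕⁿ-graded k-algebra with diagonal subring S^Δ of dimension d. If S admits a complete reduction of type r, then r ≥ d; and if r = d, then with X_j = ∏ᵢ x_{ij}, the elements X₁,...,X_d are algebraically independent over k and k[X₁,...,X_d] ⊆ S^Δ is a graded Noether normalization of S^Δ. -/
/-!
Integral ring maps do not raise Krull dimension, and `k[X₁, …, X_r]` is a quotient of a polynomial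
ring in `r` variables, so `d = dim S^Δ ≤ dim k[X₁, …, X_r] ≤ r`. A nonzero algebraic relation among
the `X_j` would be a nonzerodivisor in the kernel of the quotient map, and would make the second
inequality strict.
-/

/-- A complete reduction of type `r` of a standard `ℕⁿ`-graded `k`-algebra `S`
(with grading `𝒜`): an `n × r` matrix `{x_{ij}}` with `x_{ij} ∈ S^{(i)}`
(the degree-`eᵢ` component) such that, with `X_j = ∏ᵢ x_{ij}`, the diagonal
subring `S^Δ = k[S_{(1,…,1)}]` is a finite module over `k[X₁, …, X_r]`. -/
def IsCompleteReduction (k : Type*) {S : Type*} [Field k] [CommRing S]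
    [Algebra k S] {n : ℕ} (𝒜 : (Fin n → ℕ) → Submodule k S) {r : ℕ}
    (x : Fin n → Fin r → S) : Prop :=
  (∀ i j, x i j ∈ 𝒜 (Pi.single i 1)) ∧
  ∃ h : Algebra.adjoin k (Set.range fun j => ∏ i, x i j) ≤
      Algebra.adjoin k (𝒜 (fun _ => 1) : Set S),
    (Subalgebra.inclusion h).toRingHom.Finite

section KrullDimension

variable {A B : Type*} [CommRing A] [CommRing B] {f : A →+* B}

theorem ringKrullDim_le_of_isIntegral_s19 (hf : f.IsIntegral) : ringKrullDim B ≤ ringKrullDim A := by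
  algebraize [f]
  exact Order.krullDim_le_of_strictMono (PrimeSpectrum.comap f) fun _ _ hpq =>
    Ideal.IsIntegral.comap_lt_comap (R := A) hpq

variable (A) in
theorem exists_ringKrullDim_eq_natCast [FiniteRingKrullDim A] : ∃ d : ℕ, ringKrullDim A = d :=
  ⟨_, Order.krullDim_eq_length_of_finiteDimensionalOrder⟩

theorem injective_of_surjective_of_ringKrullDim_le [IsDomain A] [FiniteRingKrullDim A]
    (hf : Function.Surjective f) (hdim : ringKrullDim A ≤ ringKrullDim B) :
    Function.Injective f := by
  rw [injective_iff_map_eq_zero]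
  intro a ha
  by_contra ha_ne
  have hsucc : ringKrullDim B + 1 ≤ ringKrullDim A :=
    ringKrullDim_succ_le_of_surjective f hf (mem_nonZeroDivisors_of_ne_zero ha_ne) ha
  obtain ⟨d, hd⟩ := exists_ringKrullDim_eq_natCast A
  rw [hd] at hdim hsucc
  exact (ENat.WithBot.add_one_le_iff.mp ((add_le_add_left hdim 1).trans hsucc)).false

end KrullDimension

section AdjoinRange

variable {R S ι : Type*} [CommRing R] [CommRing S] [Algebra R S] {X : ι → S}

theorem ringKrullDim_adjoin_range_le :
    ringKrullDim (Algebra.adjoin R (Set.range X)) ≤ ringKrullDim (MvPolynomial ι R) := by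
  rw [Algebra.adjoin_range_eq_range_aeval]
  exact ringKrullDim_le_of_surjective (MvPolynomial.aeval X).rangeRestrict.toRingHom
    (MvPolynomial.aeval X).rangeRestrict_surjective

theorem algebraicIndependent_of_ringKrullDim_le [IsDomain R] [FiniteRingKrullDim (MvPolynomial ι R)]
    (hdim : ringKrullDim (MvPolynomial ι R) ≤ ringKrullDim (Algebra.adjoin R (Set.range X))) :
    AlgebraicIndependent R X := by
  rw [Algebra.adjoin_range_eq_range_aeval] at hdim
  have hinj : Function.Injective (MvPolynomial.aeval (R := R) X).rangeRestrict.toRingHom :=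
    injective_of_surjective_of_ringKrullDim_le (MvPolynomial.aeval X).rangeRestrict_surjective hdim
  exact Subtype.val_injective.comp hinj

variable [IsNoetherianRing R] [FiniteRingKrullDim R] [Finite ι]

theorem finiteRingKrullDim_mvPolynomial : FiniteRingKrullDim (MvPolynomial ι R) := by
  obtain ⟨d, hd⟩ := exists_ringKrullDim_eq_natCast R
  rw [finiteRingKrullDim_iff_ne_bot_and_top, MvPolynomial.ringKrullDim_of_isNoetherianRing, hd,
    ← Nat.cast_add]
  exact ⟨WithBot.coe_ne_bot, WithBot.coe_injective.ne (ENat.natCast_ne_top _)⟩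

theorem complete_reduction_type_ge_dim_general [IsDomain R] {B : Type*} [CommRing B]
    {f : Algebra.adjoin R (Set.range X) →+* B} (hf : f.IsIntegral) :
    ringKrullDim B ≤ ringKrullDim R + Nat.card ι ∧
    (ringKrullDim B = ringKrullDim R + Nat.card ι → AlgebraicIndependent R X) := by
  have : FiniteRingKrullDim (MvPolynomial ι R) := finiteRingKrullDim_mvPolynomial
  have hB := ringKrullDim_le_of_isIntegral_s19 hf
  rw [← MvPolynomial.ringKrullDim_of_isNoetherianRing]
  exact ⟨hB.trans ringKrullDim_adjoin_range_le,
    fun heq => algebraicIndependent_of_ringKrullDim_le (heq.symm.trans_le hB)⟩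

end AdjoinRange

/-- If a standard `ℕⁿ`-graded algebra `S` with `d = dim S^Δ` admits a complete
reduction of type `r`, then `r ≥ d`; and if `r = d`, then the column products
`X₁, …, X_d` are algebraically independent over `k` and `k[X₁,…,X_d] ⊆ S^Δ` is
a graded Noether normalization of `S^Δ`. -/
theorem complete_reduction_type_ge_dim (k S : Type*) [Field k] [CommRing S]
    [Algebra k S] (n : ℕ) (𝒜 : (Fin n → ℕ) → Submodule k S) [GradedAlgebra 𝒜]
    (hfg : Algebra.FiniteType k S) (h0 : 𝒜 0 = 1)
    (hstd : Algebra.adjoin k (⋃ i, (𝒜 (Pi.single i 1) : Set S)) = ⊤)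
    (d : ℕ)
    (hdim : ringKrullDim ↥(Algebra.adjoin k (𝒜 (fun _ => 1) : Set S)) = d)
    (r : ℕ) (x : Fin n → Fin r → S) (hx : IsCompleteReduction k 𝒜 x) :
    d ≤ r ∧
    (r = d →
      AlgebraicIndependent k (fun j => ∏ i, x i j) ∧
      ∃ h : Algebra.adjoin k (Set.range fun j => ∏ i, x i j) ≤
          Algebra.adjoin k (𝒜 (fun _ => 1) : Set S),
        (Subalgebra.inclusion h).toRingHom.Finite) := by
  obtain ⟨-, h, hfin⟩ := hx
  have hgen := complete_reduction_type_ge_dim_general hfin.to_isIntegral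
  simp only [hdim, ringKrullDim_eq_zero_of_field, zero_add, Nat.card_fin, Nat.cast_le,
    Nat.cast_inj] at hgen
  exact ⟨hgen.1, fun hrd => ⟨hgen.2 hrd.symm, h, hfin⟩⟩
end
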